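/- Let q be a prime power, d ≥ 2 an integer, and ν, t, m₁, …, m_d positive integers with m₁ ≥ m₂ ≥ ⋯ ≥ m_d ≥ t and 2ν ≥ 2m₁ + m₂ + 1. Suppose ℱᵢ ⊆ 𝒫_{mᵢ} (i = 1, …, d) satisfy dim(F₁ ∩ F₂ ∩ ⋯ ∩ F_d) ≥ t for all choices Fᵢ ∈ ℱᵢ. Then ∏_{i=1}^d |ℱᵢ| ≤ ∏_{i=1}^d N'(t;mᵢ;2ν), and if equality holds then there exists T ∈ 𝒫_t such that ℱᵢ = {F ∈ 𝒫_{mᵢ} : T ⊆ F} for every i ∈ {1, …, d}. -/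

import Mathlib

open Finset Module

noncomputable section

/-- Gaussian binomial coefficient `[n choose k]_q` as a rational number. -/
def gaussBinom (q n k : ℕ) : ℚ :=
  ∏ i ∈ Finset.range k, ((q : ℚ) ^ ((n : ℤ) - i) - 1) / ((q : ℚ) ^ ((k : ℤ) - i) - 1)

/-- `N'(a; m; 2ν)`, the number of `m`-dim totally isotropic subspaces containing
a fixed `a`-dim one. -/
def Nprime (q a m ν : ℕ) : ℚ :=
  ∏ i ∈ Finset.Icc 1 (m - a), ((q : ℚ) ^ (2 * ((ν : ℤ) - m + i)) - 1) / ((q : ℚ) ^ (i : ℤ) - 1)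

variable {K V : Type*} [Field K] [AddCommGroup V] [Module K V]

/-- A subspace is totally isotropic w.r.t. the bilinear form `f`. -/
def TotallyIsotropic (f : V →ₗ[K] V →ₗ[K] K) (W : Submodule K V) : Prop :=
  ∀ x ∈ W, ∀ y ∈ W, f x y = 0

/-- `polar f m` = `𝒫_m`, the set of `m`-dimensional totally isotropic subspaces. -/
def polar (f : V →ₗ[K] V →ₗ[K] K) (m : ℕ) : Set (Submodule K V) :=
  {W | TotallyIsotropic f W ∧ finrank K W = m}

/-- `X` is a `t`-cover of the family `ℱ`. -/
def IsTCover (f : V →ₗ[K] V →ₗ[K] K) (t : ℕ) (ℱ : Set (Submodule K V))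
    (X : Submodule K V) : Prop :=
  TotallyIsotropic f X ∧ ∀ F ∈ ℱ, t ≤ finrank K ↥(X ⊓ F)

/-- `τ_t(ℱ)`, the minimum dimension of a `t`-cover of `ℱ`. -/
def tauCover (f : V →ₗ[K] V →ₗ[K] K) (t : ℕ) (ℱ : Set (Submodule K V)) : ℕ :=
  sInf {x | ∃ X, IsTCover f t ℱ X ∧ finrank K ↥X = x}

def C1 (f : V →ₗ[K] V →ₗ[K] K) (M T : Submodule K V) (m t : ℕ) : Set (Submodule K V) :=
  {F | F ∈ polar f m ∧ T ≤ F ∧ t + 1 ≤ finrank K ↥(F ⊓ M)}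

def C2 (f : V →ₗ[K] V →ₗ[K] K) (M T : Submodule K V) (m : ℕ) : Set (Submodule K V) :=
  {F | F ∈ polar f m ∧ T ≤ F} ∪ {F | F ∈ polar f m ∧ F ≤ M}

def C3 (f : V →ₗ[K] V →ₗ[K] K) (S : Submodule K V) (m : ℕ) : Set (Submodule K V) :=
  {F | F ∈ polar f m ∧ S ≤ F}

def C4 (f : V →ₗ[K] V →ₗ[K] K) (S : Submodule K V) (m t : ℕ) : Set (Submodule K V) :=
  {F | F ∈ polar f m ∧ t ≤ finrank K ↥(F ⊓ S)}

def s0 (q ν m s t : ℕ) : ℚ :=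
  gaussBinom q (s - t) 1 * Nprime q (t + 1) m ν - q * gaussBinom q (s - t) 2 * Nprime q (t + 2) m ν

/-!
Take two cross-`t`-intersecting families `ℱ ⊆ 𝒫_m` and `𝒢 ⊆ 𝒫_n`. A subspace `S` of dimension below
the `t`-covering number `τ_t(𝒢)` meets some `G ∈ 𝒢` in dimension less than `t`; double counting the
pairs `(F, v)` with `S ≤ F ∈ ℱ` and `v ∈ (F ⊓ G) \ S` shows that adjoining a vector of `G` to `S`
loses at most a factor `2 q ^ (n - t)`. Starting from the `t`-dimensional subspaces of a minimal
`t`-cover of `ℱ`, of which there are at most `(2 q ^ t) ^ (τ_t(ℱ) - t)`, this bounds `|ℱ|`. In the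
product `|ℱ| |𝒢|` each dimension of `τ_t(𝒢)` above `t` thus costs at most `4 q ^ n`, whereas
`N'(s; m; 2ν)` drops by more than `4 q ^ n` when `s` increases by one, because `2ν ≥ 2m + n + 1`.
Hence `|ℱ| |𝒢| ≤ N'(t; m; 2ν) N'(t; n; 2ν)`, and equality forces both covering numbers to be `t`, so
that both families consist of all members through a `t`-space; the two `t`-spaces agree by the same
double counting. Multiplying over all pairs of families gives the bound for `d` of them.
-/

section Nprime

variable {q ν m n s t : ℕ}

lemma Nprime_pos (hq : 1 < q) (hm : m ≤ ν) : 0 < Nprime q s m ν := by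
  have hq' : (1 : ℚ) < q := mod_cast hq
  refine Finset.prod_pos fun i hi => ?_
  have hi := (Finset.mem_Icc.mp hi).1
  exact div_pos (sub_pos.2 (one_lt_zpow₀ hq' (by omega)))
    (sub_pos.2 (one_lt_zpow₀ hq' (by omega)))

lemma Nprime_eq_one_of_le (h : m ≤ s) : Nprime q s m ν = 1 := by
  simp [Nprime, Nat.sub_eq_zero_of_le h]

lemma Nprime_eq_Nprime_succ_mul (hs : s < m) (hm : m ≤ ν) :
    Nprime q s m ν =
      Nprime q (s + 1) m ν * (((q : ℚ) ^ (2 * (ν - s)) - 1) / ((q : ℚ) ^ (m - s) - 1)) := by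
  have hsucc : m - s = (m - (s + 1)) + 1 := by omega
  unfold Nprime
  rw [hsucc, Finset.prod_Icc_succ_top (by omega), ← hsucc, ← zpow_natCast (q : ℚ) (2 * (ν - s)),
    ← zpow_natCast (q : ℚ) (m - s)]
  congr 5
  push_cast [Nat.cast_sub (show s ≤ ν by omega), Nat.cast_sub hs.le]
  ring

lemma pow_sub_pow_mul_Nprime (hq : 1 < q) (hs : s < m) (hm : m ≤ ν) :
    ((q : ℚ) ^ m - (q : ℚ) ^ s) * Nprime q s m ν =
      ((q : ℚ) ^ (2 * ν - s) - (q : ℚ) ^ s) * Nprime q (s + 1) m ν := by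
  have hm_pow : (q : ℚ) ^ m = (q : ℚ) ^ s * (q : ℚ) ^ (m - s) := by
    rw [← pow_add]; congr 1; omega
  have hν_pow : (q : ℚ) ^ (2 * ν - s) = (q : ℚ) ^ s * (q : ℚ) ^ (2 * (ν - s)) := by
    rw [← pow_add]; congr 1; omega
  have hne : (q : ℚ) ^ (m - s) - 1 ≠ 0 :=
    (sub_pos.2 (one_lt_pow₀ (mod_cast hq) (by omega))).ne'
  rw [Nprime_eq_Nprime_succ_mul hs hm, hm_pow, hν_pow]
  field_simp

lemma four_mul_pow_mul_Nprime_succ_lt (hq : 1 < q) (hs : s < m) (hdim : 2 * m + n + 1 ≤ 2 * ν) :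
    4 * (q : ℚ) ^ n * Nprime q (s + 1) m ν < Nprime q s m ν := by
  have hq' : (1 : ℚ) < q := mod_cast hq
  have hq2 : (2 : ℚ) ≤ q := mod_cast hq
  have hmν : m ≤ ν := by omega
  have hden : 0 < (q : ℚ) ^ m - (q : ℚ) ^ s := sub_pos.2 (pow_lt_pow_right₀ hq' hs)
  have hbig : 4 * (q : ℚ) ^ n * (q : ℚ) ^ m ≤ (q : ℚ) ^ (2 * ν - s) := calc
    4 * (q : ℚ) ^ n * (q : ℚ) ^ m ≤ (q : ℚ) ^ 2 * (q : ℚ) ^ n * (q : ℚ) ^ m := by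
      gcongr; nlinarith
    _ = (q : ℚ) ^ (2 + n + m) := by ring
    _ ≤ (q : ℚ) ^ (2 * ν - s) := pow_le_pow_right₀ hq'.le (by omega)
  have hfactor :
      ((q : ℚ) ^ m - (q : ℚ) ^ s) * (4 * (q : ℚ) ^ n) < (q : ℚ) ^ (2 * ν - s) - (q : ℚ) ^ s := by
    have hn : (1 : ℚ) ≤ (q : ℚ) ^ n := one_le_pow₀ hq'.le
    have hs0 : (0 : ℚ) < (q : ℚ) ^ s := by positivity
    nlinarith
  refine lt_of_mul_lt_mul_left ?_ hden.le
  rw [pow_sub_pow_mul_Nprime hq hs hmν, ← mul_assoc]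
  exact mul_lt_mul_of_pos_right hfactor (Nprime_pos hq hmν)

lemma four_mul_pow_pow_mul_Nprime_le (hq : 1 < q) (hdim : 2 * m + n + 1 ≤ 2 * ν) (hts : t ≤ s)
    (hsm : s ≤ m) : (4 * (q : ℚ) ^ n) ^ (s - t) * Nprime q s m ν ≤ Nprime q t m ν := by
  induction s, hts using Nat.le_induction with
  | base => simp
  | succ s hts ih =>
    calc (4 * (q : ℚ) ^ n) ^ (s + 1 - t) * Nprime q (s + 1) m ν
        = (4 * (q : ℚ) ^ n) ^ (s - t) * (4 * (q : ℚ) ^ n * Nprime q (s + 1) m ν) := by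
          rw [Nat.sub_add_comm hts]; ring
      _ ≤ (4 * (q : ℚ) ^ n) ^ (s - t) * Nprime q s m ν := by
          gcongr; exact (four_mul_pow_mul_Nprime_succ_lt hq hsm hdim).le
      _ ≤ Nprime q t m ν := ih (by omega)

lemma four_mul_pow_pow_mul_Nprime_lt (hq : 1 < q) (hdim : 2 * m + n + 1 ≤ 2 * ν) (hts : t < s)
    (hsm : s ≤ m) : (4 * (q : ℚ) ^ n) ^ (s - t) * Nprime q s m ν < Nprime q t m ν := by
  calc (4 * (q : ℚ) ^ n) ^ (s - t) * Nprime q s m ν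
      = 4 * (q : ℚ) ^ n * ((4 * (q : ℚ) ^ n) ^ (s - (t + 1)) * Nprime q s m ν) := by
        rw [show s - t = s - (t + 1) + 1 by omega]; ring
    _ ≤ 4 * (q : ℚ) ^ n * Nprime q (t + 1) m ν := by
        gcongr; exact four_mul_pow_pow_mul_Nprime_le hq hdim hts hsm
    _ < Nprime q t m ν := four_mul_pow_mul_Nprime_succ_lt hq (by omega) hdim

end Nprime

section GaussBinom

variable {q : ℕ} (a k : ℕ)

lemma gaussBinom_add_succ :
    gaussBinom q (a + (k + 1)) (k + 1) =
      gaussBinom q (a + k) k * (((q : ℚ) ^ (a + (k + 1)) - 1) / ((q : ℚ) ^ (k + 1) - 1)) := by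
  unfold gaussBinom
  rw [Finset.prod_range_succ']
  congr 1
  refine Finset.prod_congr rfl fun i _ => ?_
  congr 3 <;> push_cast <;> ring

lemma gaussBinom_succ_add_mul :
    gaussBinom q (a + 1 + k) k * ((q : ℚ) ^ (a + 1) - 1) =
      gaussBinom q (a + k) k * ((q : ℚ) ^ (a + 1 + k) - 1) := by
  induction k with
  | zero => simp [gaussBinom]
  | succ k ih =>
    rw [gaussBinom_add_succ, gaussBinom_add_succ, mul_right_comm, ih,
      show a + (k + 1) = a + 1 + k by ring]
    ring

lemma gaussBinom_self (hq : 1 < q) : gaussBinom q k k = 1 := by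
  refine Finset.prod_eq_one fun i hi => div_self ?_
  have hik := Finset.mem_range.1 hi
  exact (sub_pos.2 (one_lt_zpow₀ (mod_cast hq) (by omega))).ne'

lemma gaussBinom_add_le (hq : 1 < q) : gaussBinom q (a + k) k ≤ (2 * (q : ℚ) ^ k) ^ a := by
  have hq' : (1 : ℚ) < q := mod_cast hq
  have hq2 : (2 : ℚ) ≤ q := mod_cast hq
  induction a with
  | zero => simp [gaussBinom_self k hq]
  | succ a ih =>
    have ha : (2 : ℚ) ≤ (q : ℚ) ^ (a + 1) := hq2.trans (le_self_pow₀ hq'.le (by omega))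
    have hk : (1 : ℚ) ≤ (q : ℚ) ^ k := one_le_pow₀ hq'.le
    have hratio : (q : ℚ) ^ (a + 1 + k) - 1 ≤ 2 * (q : ℚ) ^ k * ((q : ℚ) ^ (a + 1) - 1) := by
      rw [pow_add]; nlinarith
    refine le_of_mul_le_mul_right ?_ (show 0 < (q : ℚ) ^ (a + 1) - 1 by linarith)
    calc gaussBinom q (a + 1 + k) k * ((q : ℚ) ^ (a + 1) - 1)
        = gaussBinom q (a + k) k * ((q : ℚ) ^ (a + 1 + k) - 1) := gaussBinom_succ_add_mul a k
      _ ≤ (2 * (q : ℚ) ^ k) ^ a * (2 * (q : ℚ) ^ k * ((q : ℚ) ^ (a + 1) - 1)) :=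
          mul_le_mul ih hratio (sub_nonneg.2 (one_le_pow₀ hq'.le)) (by positivity)
      _ = (2 * (q : ℚ) ^ k) ^ (a + 1) * ((q : ℚ) ^ (a + 1) - 1) := by ring

end GaussBinom

section DoubleCounting

lemma ncard_mul_le_ncard_mul {α β R : Type*} [Semiring R] [PartialOrder R] [IsOrderedRing R]
    (r : α → β → Prop) {s : Set α} {t : Set β} (hs : s.Finite) (ht : t.Finite) {m n : R}
    (hm : ∀ a ∈ s, m ≤ ({b ∈ t | r a b}.ncard : R))
    (hn : ∀ b ∈ t, ({a ∈ s | r a b}.ncard : R) ≤ n) : s.ncard * m ≤ t.ncard * n := by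
  classical
  lift s to Finset α using hs
  lift t to Finset β using ht
  have hcount := Finset.card_nsmul_le_card_nsmul r (s := s) (t := t) (m := m) (n := n)
    (fun a ha => by simpa only [← Set.ncard_coe_finset, coe_bipartiteAbove, mem_coe] using hm a ha)
    (fun b hb => by simpa only [← Set.ncard_coe_finset, coe_bipartiteBelow, mem_coe] using hn b hb)
  simpa only [Set.ncard_coe_finset, nsmul_eq_mul] using hcount

variable [Finite V] {ℱ : Set (Submodule K V)} {S X Y G : Submodule K V} {t : ℕ} {M : ℚ}

lemma ncard_sdiff_eq_pow_sub_pow {U W : Submodule K V} (hUW : U ≤ W) :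
    (((W : Set V) \ U).ncard : ℚ) =
      (Nat.card K : ℚ) ^ finrank K W - (Nat.card K : ℚ) ^ finrank K U := by
  have hcard (W : Submodule K V) : (W : Set V).ncard = Nat.card K ^ finrank K W :=
    Module.natCard_eq_pow_finrank
  rw [← Nat.cast_pow, ← Nat.cast_pow, ← hcard, ← hcard, Set.cast_ncard_sdiff hUW (Set.toFinite _)]

variable [Finite K]

lemma ncard_inter_Ici_mul_le (hY : ∀ F ∈ ℱ, S ≤ F → t ≤ finrank K ↥(F ⊓ Y))
    (hM : ∀ v ∈ Y, v ∉ S → ((ℱ ∩ Set.Ici (S ⊔ K ∙ v)).ncard : ℚ) ≤ M) :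
    ((ℱ ∩ Set.Ici S).ncard : ℚ) *
        ((Nat.card K : ℚ) ^ t - (Nat.card K : ℚ) ^ finrank K ↥(S ⊓ Y)) ≤
      ((Nat.card K : ℚ) ^ finrank K Y - (Nat.card K : ℚ) ^ finrank K ↥(S ⊓ Y)) * M := by
  rw [← ncard_sdiff_eq_pow_sub_pow (inf_le_right : S ⊓ Y ≤ Y)]
  refine ncard_mul_le_ncard_mul (fun F v => v ∈ F) (Set.toFinite _) (Set.toFinite _) ?_ ?_
  · rintro F ⟨hF, hSF : S ≤ F⟩
    have hvectors : {v ∈ (Y : Set V) \ ↑(S ⊓ Y) | v ∈ F} = ↑(F ⊓ Y) \ ↑(S ⊓ Y) := by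
      ext v
      simp only [Set.mem_ofPred_eq, Set.mem_sdiff, SetLike.mem_coe, Submodule.mem_inf]
      tauto
    rw [hvectors, ncard_sdiff_eq_pow_sub_pow (inf_le_inf_right Y hSF)]
    gcongr
    · exact_mod_cast Finite.card_pos
    · exact hY F hF hSF
  · rintro v ⟨hvY : v ∈ Y, hv⟩
    have hvS : v ∉ S := fun hvS => hv ⟨hvS, hvY⟩
    have hmembers : {F ∈ ℱ ∩ Set.Ici S | v ∈ F} = ℱ ∩ Set.Ici (S ⊔ K ∙ v) := by
      ext F
      simp only [Set.mem_ofPred_eq, Set.mem_inter_iff, Set.mem_Ici, sup_le_iff,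
        Submodule.span_singleton_le_iff_mem, and_assoc]
    rw [hmembers]
    exact hM v hvY hvS

lemma ncard_inter_Ici_le_two_mul (hM0 : 0 ≤ M) (htG : t ≤ finrank K G)
    (hG : ∀ F ∈ ℱ, t ≤ finrank K ↥(F ⊓ G)) (hS : finrank K ↥(S ⊓ G) < t)
    (hM : ∀ v ∉ S, ((ℱ ∩ Set.Ici (S ⊔ K ∙ v)).ncard : ℚ) ≤ M) :
    ((ℱ ∩ Set.Ici S).ncard : ℚ) ≤ 2 * (Nat.card K : ℚ) ^ (finrank K G - t) * M := by
  have hq : (2 : ℚ) ≤ Nat.card K := mod_cast Finite.one_lt_card (α := K)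
  set q : ℚ := (Nat.card K : ℚ)
  set k := finrank K ↥(S ⊓ G)
  have hdouble : 2 * q ^ k ≤ q ^ t := calc
    2 * q ^ k ≤ q * q ^ k := by gcongr
    _ = q ^ (k + 1) := (pow_succ' q k).symm
    _ ≤ q ^ t := pow_le_pow_right₀ (by linarith) hS
  have hk : 0 < q ^ k := by positivity
  have hratio : q ^ finrank K G - q ^ k ≤ 2 * q ^ (finrank K G - t) * (q ^ t - q ^ k) := by
    have : 0 < q ^ (finrank K G - t) := by positivity
    rw [← pow_sub_mul_pow q htG]
    nlinarith
  refine le_of_mul_le_mul_right ?_ (show 0 < q ^ t - q ^ k by linarith)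
  calc ((ℱ ∩ Set.Ici S).ncard : ℚ) * (q ^ t - q ^ k) ≤ (q ^ finrank K G - q ^ k) * M :=
        ncard_inter_Ici_mul_le (fun F hF _ => hG F hF) fun v _ hv => hM v hv
    _ ≤ 2 * q ^ (finrank K G - t) * (q ^ t - q ^ k) * M := by gcongr
    _ = 2 * q ^ (finrank K G - t) * M * (q ^ t - q ^ k) := by ring

lemma ncard_inter_Ici_le_gaussBinom_mul (hX : ∀ F ∈ ℱ, t ≤ finrank K ↥(X ⊓ F))
    (htX : t ≤ finrank K X)
    (hM : ∀ T : Submodule K V, finrank K T = t → ((ℱ ∩ Set.Ici T).ncard : ℚ) ≤ M)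
    (k : ℕ) (hSX : S ≤ X) (hS : finrank K S + k = t) :
    ((ℱ ∩ Set.Ici S).ncard : ℚ) ≤ gaussBinom (Nat.card K) (finrank K X - t + k) k * M := by
  have hq1 : (1 : ℚ) < Nat.card K := mod_cast Finite.one_lt_card (α := K)
  set q : ℚ := (Nat.card K : ℚ) with hq
  induction k generalizing S with
  | zero => simpa [gaussBinom] using hM S hS
  | succ k ih =>
    set a := finrank K X - t
    set s := finrank K S
    have hstep : ((ℱ ∩ Set.Ici S).ncard : ℚ) * (q ^ t - q ^ s) ≤
        (q ^ finrank K X - q ^ s) * (gaussBinom (Nat.card K) (a + k) k * M) := by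
      have := ncard_inter_Ici_mul_le (S := S) (Y := X)
        (fun F hF _ => by rw [inf_comm]; exact hX F hF) fun v hv hvS =>
          ih (sup_le hSX (by simpa using hv))
            (by rw [Submodule.finrank_sup_span_singleton hvS]; omega)
      rwa [inf_eq_left.2 hSX] at this
    have ht_pow : q ^ t - q ^ s = q ^ s * (q ^ (k + 1) - 1) := by
      rw [← hS]; ring
    have hX_pow : q ^ finrank K X - q ^ s = q ^ s * (q ^ (a + (k + 1)) - 1) := by
      rw [show finrank K X = s + (a + (k + 1)) by omega]; ring
    have hs : 0 < q ^ s := by positivity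
    have hk : 0 < q ^ (k + 1) - 1 := sub_pos.2 (one_lt_pow₀ hq1 (by omega))
    rw [ht_pow, hX_pow] at hstep
    rw [gaussBinom_add_succ, ← hq, mul_div_assoc', div_mul_eq_mul_div, le_div_iff₀ hk]
    refine le_of_mul_le_mul_left ?_ hs
    linarith

lemma ncard_le_gaussBinom_mul (hX : ∀ F ∈ ℱ, t ≤ finrank K ↥(X ⊓ F)) (htX : t ≤ finrank K X)
    (hM : ∀ T : Submodule K V, finrank K T = t → ((ℱ ∩ Set.Ici T).ncard : ℚ) ≤ M) :
    (ℱ.ncard : ℚ) ≤ gaussBinom (Nat.card K) (finrank K X) t * M := by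
  have h := ncard_inter_Ici_le_gaussBinom_mul hX htX hM t bot_le (by simp)
  rwa [Set.Ici_bot, Set.inter_univ, Nat.sub_add_cancel htX] at h

end DoubleCounting

section Isotropic

variable {f : V →ₗ[K] V →ₗ[K] K} {S W : Submodule K V}

lemma TotallyIsotropic.mono (hW : TotallyIsotropic f W) (hSW : S ≤ W) : TotallyIsotropic f S :=
  fun x hx y hy => hW x (hSW hx) y (hSW hy)

lemma TotallyIsotropic.le_orthogonal (hW : TotallyIsotropic f W) (hSW : S ≤ W) :
    W ≤ LinearMap.BilinForm.orthogonal f S :=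
  fun x hx y hy => hW y (hSW hy) x hx

variable [Finite K] [Finite V] {ν m n s : ℕ}

lemma ncard_polar_inter_Ici_le (hf : f.Nondegenerate) (hV : finrank K V = 2 * ν) (hm : m ≤ ν)
    (S : Submodule K V) :
    ((polar f m ∩ Set.Ici S).ncard : ℚ) ≤ Nprime (Nat.card K) (finrank K S) m ν := by
  have hq : 1 < Nat.card K := Finite.one_lt_card
  induction hj : m - finrank K S generalizing S with
  | zero =>
    have hsub : polar f m ∩ Set.Ici S ⊆ {S} := fun F hF =>
      (Submodule.eq_of_le_of_finrank_le hF.2 (by have := hF.1.2; omega)).symm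
    rw [Nprime_eq_one_of_le (by omega)]
    exact_mod_cast (Set.ncard_le_ncard hsub).trans (Set.ncard_singleton S).le
  | succ j ih =>
    rcases (polar f m ∩ Set.Ici S).eq_empty_or_nonempty with hempty | ⟨F₀, hF₀, hSF₀⟩
    · rw [hempty, Set.ncard_empty, Nat.cast_zero]
      exact (Nprime_pos hq hm).le
    set s := finrank K S with hs
    have hSperp : S ≤ LinearMap.BilinForm.orthogonal f S :=
      (hF₀.1.mono hSF₀).le_orthogonal le_rfl
    have hstep := ncard_inter_Ici_mul_le (ℱ := polar f m) (t := m)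
      (Y := LinearMap.BilinForm.orthogonal f S) (M := Nprime (Nat.card K) (s + 1) m ν)
      (fun F hF hSF => by rw [inf_eq_left.2 (hF.1.le_orthogonal hSF), hF.2])
      (fun v _ hv => by
        have hsucc := Submodule.finrank_sup_span_singleton hv
        rw [hs, ← hsucc]
        exact ih _ (by omega))
    rw [inf_eq_left.2 hSperp, LinearMap.BilinForm.finrank_orthogonal hf, hV, ← hs,
      ← pow_sub_pow_mul_Nprime hq (by omega) hm, mul_comm] at hstep
    exact le_of_mul_le_mul_left hstep
      (sub_pos.2 (pow_lt_pow_right₀ (mod_cast hq) (by omega)))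

lemma four_mul_pow_mul_ncard_inter_Ici_lt (hf : f.Nondegenerate) (hV : finrank K V = 2 * ν)
    (hdim : 2 * m + n + 1 ≤ 2 * ν) (hS : finrank K S = s + 1) :
    4 * (Nat.card K : ℚ) ^ n * ((polar f m ∩ Set.Ici S).ncard : ℚ) < Nprime (Nat.card K) s m ν := by
  have hq : 1 < Nat.card K := Finite.one_lt_card
  have hm : m ≤ ν := by omega
  rcases lt_or_ge s m with hsm | hms
  · refine lt_of_le_of_lt ?_ (four_mul_pow_mul_Nprime_succ_lt hq hsm hdim)
    gcongr
    exact hS ▸ ncard_polar_inter_Ici_le hf hV hm S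
  · have hempty : polar f m ∩ Set.Ici S = ∅ := by
      refine Set.eq_empty_of_forall_notMem fun F hF => ?_
      have hle := Submodule.finrank_mono (show S ≤ F from hF.2)
      have := hF.1.2
      omega
    simpa [hempty] using Nprime_pos hq hm

end Isotropic

section CrossIntersecting

/-- Two families of subspaces are cross-`t`-intersecting if every member of the first meets every
member of the second in dimension at least `t`. -/
def CrossIntersecting (t : ℕ) (ℱ 𝒢 : Set (Submodule K V)) : Prop :=
  ∀ F ∈ ℱ, ∀ G ∈ 𝒢, t ≤ finrank K ↥(F ⊓ G)

variable {f : V →ₗ[K] V →ₗ[K] K} {ℱ 𝒢 : Set (Submodule K V)} {S T X : Submodule K V}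
  {ν m n t : ℕ}

lemma CrossIntersecting.symm (h : CrossIntersecting t ℱ 𝒢) : CrossIntersecting t 𝒢 ℱ :=
  fun G hG F hF => inf_comm F G ▸ h F hF G hG

lemma crossIntersecting_of_forall_transversal {ι : Type*} {ℱ : ι → Set (Submodule K V)}
    (hne : ∀ i, (ℱ i).Nonempty)
    (h : ∀ F : ι → Submodule K V, (∀ i, F i ∈ ℱ i) →
      Pairwise fun i j => t ≤ finrank K ↥(F i ⊓ F j)) :
    Pairwise fun i j => CrossIntersecting t (ℱ i) (ℱ j) := by
  classical
  intro i j hij F hF G hG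
  choose H hH using hne
  have hmem : ∀ k, Function.update (Function.update H i F) j G k ∈ ℱ k :=
    (Function.forall_update_iff _ fun k W => W ∈ ℱ k).2
      ⟨hG, fun k _ => (Function.forall_update_iff H fun k W => W ∈ ℱ k).2
        ⟨hF, fun l _ => hH l⟩ k⟩
  have hFG : t ≤ finrank K ↥(Function.update (Function.update H i F) j G i ⊓
      Function.update (Function.update H i F) j G j) := h _ hmem hij
  rwa [Function.update_of_ne hij, Function.update_self, Function.update_self] at hFG

lemma IsTCover.tauCover_le (hX : IsTCover f t ℱ X) : tauCover f t ℱ ≤ finrank K X :=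
  Nat.sInf_le ⟨X, hX, rfl⟩

lemma IsTCover.exists_finrank_eq_tauCover (hX : IsTCover f t ℱ X) :
    ∃ Y, IsTCover f t ℱ Y ∧ finrank K Y = tauCover f t ℱ :=
  Nat.sInf_mem (s := {x | ∃ Y, IsTCover f t ℱ Y ∧ finrank K ↥Y = x}) ⟨_, X, hX, rfl⟩

lemma exists_finrank_inf_lt_of_lt_tauCover (hS : TotallyIsotropic f S)
    (hlt : finrank K S < tauCover f t 𝒢) : ∃ G ∈ 𝒢, finrank K ↥(S ⊓ G) < t := by
  by_contra! hcover
  exact hlt.not_ge (IsTCover.tauCover_le ⟨hS, hcover⟩)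

lemma CrossIntersecting.isTCover (h : CrossIntersecting t ℱ 𝒢) (hℱ : ℱ ⊆ polar f m)
    {F : Submodule K V} (hF : F ∈ ℱ) : IsTCover f t 𝒢 F :=
  ⟨(hℱ hF).1, h F hF⟩

lemma CrossIntersecting.tauCover_le (h : CrossIntersecting t ℱ 𝒢) (hℱ : ℱ ⊆ polar f m)
    (hne : ℱ.Nonempty) : tauCover f t 𝒢 ≤ m := by
  obtain ⟨F, hF⟩ := hne
  exact (h.isTCover hℱ hF).tauCover_le.trans (hℱ hF).2.le

variable [Finite V]

lemma IsTCover.le_finrank (hX : IsTCover f t ℱ X) (hne : ℱ.Nonempty) : t ≤ finrank K X := by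
  obtain ⟨F, hF⟩ := hne
  exact (hX.2 F hF).trans (Submodule.finrank_mono inf_le_left)

lemma CrossIntersecting.le_tauCover (h : CrossIntersecting t ℱ 𝒢) (hℱ : ℱ ⊆ polar f m)
    (hℱne : ℱ.Nonempty) (h𝒢ne : 𝒢.Nonempty) : t ≤ tauCover f t 𝒢 := by
  obtain ⟨F, hF⟩ := hℱne
  obtain ⟨X, hX, hXτ⟩ := (h.isTCover hℱ hF).exists_finrank_eq_tauCover
  exact hXτ ▸ hX.le_finrank h𝒢ne

lemma IsTCover.le_of_finrank_eq (hX : IsTCover f t ℱ X) (hXt : finrank K X = t)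
    {F : Submodule K V} (hF : F ∈ ℱ) : X ≤ F :=
  inf_eq_left.1 (Submodule.eq_of_le_of_finrank_le inf_le_left (hXt ▸ hX.2 F hF))

variable [Finite K]

lemma CrossIntersecting.ncard_inter_Ici_le (h : CrossIntersecting t ℱ 𝒢) (hf : f.Nondegenerate)
    (hV : finrank K V = 2 * ν) (hm : m ≤ ν) (htn : t ≤ n) (hℱ : ℱ ⊆ polar f m)
    (h𝒢 : 𝒢 ⊆ polar f n) (hS : finrank K S ≤ tauCover f t 𝒢) :
    ((ℱ ∩ Set.Ici S).ncard : ℚ) ≤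
      (2 * (Nat.card K : ℚ) ^ (n - t)) ^ (tauCover f t 𝒢 - finrank K S) *
        Nprime (Nat.card K) (tauCover f t 𝒢) m ν := by
  have hpos : 0 < Nprime (Nat.card K) (tauCover f t 𝒢) m ν := Nprime_pos Finite.one_lt_card hm
  induction hj : tauCover f t 𝒢 - finrank K S generalizing S with
  | zero =>
    have hpolar := ncard_polar_inter_Ici_le hf hV hm S
    rw [pow_zero, one_mul, show tauCover f t 𝒢 = finrank K S by omega]
    refine le_trans ?_ hpolar
    exact_mod_cast Set.ncard_le_ncard (Set.inter_subset_inter_left _ hℱ)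
  | succ j ih =>
    rcases (ℱ ∩ Set.Ici S).eq_empty_or_nonempty with hempty | ⟨F₀, hF₀, hSF₀⟩
    · rw [hempty, Set.ncard_empty, Nat.cast_zero]
      positivity
    obtain ⟨G, hG, hSG⟩ :=
      exists_finrank_inf_lt_of_lt_tauCover (t := t) (𝒢 := 𝒢) ((hℱ hF₀).1.mono hSF₀) (by omega)
    have hGn : finrank K G = n := (h𝒢 hG).2
    rw [pow_succ', mul_assoc, ← hGn]
    refine ncard_inter_Ici_le_two_mul (by positivity) (hGn ▸ htn) (fun F hF => h F hF G hG) hSG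
      fun v hv => ?_
    have hsucc := Submodule.finrank_sup_span_singleton hv
    exact hGn ▸ ih (by omega) (by omega)

lemma CrossIntersecting.ncard_le (h : CrossIntersecting t ℱ 𝒢) (hf : f.Nondegenerate)
    (hV : finrank K V = 2 * ν) (hm : m ≤ ν) (htn : t ≤ n) (hℱ : ℱ ⊆ polar f m)
    (h𝒢 : 𝒢 ⊆ polar f n) (hℱne : ℱ.Nonempty) (h𝒢ne : 𝒢.Nonempty) :
    (ℱ.ncard : ℚ) ≤ (2 * (Nat.card K : ℚ) ^ t) ^ (tauCover f t ℱ - t) *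
      ((2 * (Nat.card K : ℚ) ^ (n - t)) ^ (tauCover f t 𝒢 - t) *
        Nprime (Nat.card K) (tauCover f t 𝒢) m ν) := by
  have htτ : t ≤ tauCover f t 𝒢 := h.le_tauCover hℱ hℱne h𝒢ne
  obtain ⟨G, hG⟩ := h𝒢ne
  obtain ⟨X, hX, hXτ⟩ := (h.symm.isTCover h𝒢 hG).exists_finrank_eq_tauCover
  have htX : t ≤ finrank K X := hX.le_finrank hℱne
  refine (ncard_le_gaussBinom_mul hX.2 htX fun T hT => by
    simpa only [hT] using
      h.ncard_inter_Ici_le (S := T) hf hV hm htn hℱ h𝒢 (hT.trans_le htτ)).trans ?_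
  have hpos : 0 < Nprime (Nat.card K) (tauCover f t 𝒢) m ν := Nprime_pos Finite.one_lt_card hm
  rw [← hXτ]
  gcongr
  simpa only [Nat.sub_add_cancel htX] using
    gaussBinom_add_le (q := Nat.card K) (finrank K X - t) t Finite.one_lt_card

lemma CrossIntersecting.ncard_mul_ncard_le_pow_mul (h : CrossIntersecting t ℱ 𝒢)
    (hf : f.Nondegenerate) (hV : finrank K V = 2 * ν) (hm : m ≤ ν) (hn : n ≤ ν) (htm : t ≤ m)
    (htn : t ≤ n) (hℱ : ℱ ⊆ polar f m) (h𝒢 : 𝒢 ⊆ polar f n) (hℱne : ℱ.Nonempty)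
    (h𝒢ne : 𝒢.Nonempty) :
    (ℱ.ncard : ℚ) * 𝒢.ncard ≤
      ((4 * (Nat.card K : ℚ) ^ n) ^ (tauCover f t 𝒢 - t) *
          Nprime (Nat.card K) (tauCover f t 𝒢) m ν) *
        ((4 * (Nat.card K : ℚ) ^ m) ^ (tauCover f t ℱ - t) *
          Nprime (Nat.card K) (tauCover f t ℱ) n ν) := by
  have hpos : 0 < Nprime (Nat.card K) (tauCover f t 𝒢) m ν := Nprime_pos Finite.one_lt_card hm
  have hsplit {k : ℕ} (htk : t ≤ k) (j : ℕ) : (4 * (Nat.card K : ℚ) ^ k) ^ j =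
      (2 * (Nat.card K : ℚ) ^ t) ^ j * (2 * (Nat.card K : ℚ) ^ (k - t)) ^ j := by
    rw [← pow_sub_mul_pow _ htk, ← mul_pow]; ring
  refine (mul_le_mul (h.ncard_le hf hV hm htn hℱ h𝒢 hℱne h𝒢ne)
    (h.symm.ncard_le hf hV hn htm h𝒢 hℱ h𝒢ne hℱne) (by positivity) (by positivity)).trans_eq ?_
  rw [hsplit htn, hsplit htm]
  ring

lemma le_of_ncard_eq_Nprime (hf : f.Nondegenerate) (hV : finrank K V = 2 * ν)
    (hdim : 2 * m + n + 1 ≤ 2 * ν) (hT : finrank K T = t) (hℱ : ℱ ⊆ polar f m ∩ Set.Ici T)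
    (hcard : (ℱ.ncard : ℚ) = Nprime (Nat.card K) t m ν) (hX : ∀ F ∈ ℱ, t ≤ finrank K ↥(F ⊓ X))
    (htX : t ≤ finrank K X) (hXn : finrank K X ≤ n) : T ≤ X := by
  have hq : 1 < Nat.card K := Finite.one_lt_card
  have hq' : (1 : ℚ) ≤ Nat.card K := mod_cast hq.le
  set N := Nprime (Nat.card K) t m ν
  have hN : 0 < N := Nprime_pos hq (by omega)
  have hn : 0 < (Nat.card K : ℚ) ^ n := by positivity
  by_contra hTX
  have hlt : finrank K ↥(T ⊓ X) < t :=
    hT ▸ Submodule.finrank_lt_finrank_of_lt (inf_lt_left.2 hTX)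
  have hstar : ℱ ∩ Set.Ici T = ℱ := Set.inter_eq_left.2 fun F hF => (hℱ hF).2
  have hbound := ncard_inter_Ici_le_two_mul (M := N / (4 * (Nat.card K : ℚ) ^ n)) (by positivity)
    htX hX hlt fun v hv => by
      rw [le_div_iff₀' (by positivity)]
      refine le_trans ?_ (four_mul_pow_mul_ncard_inter_Ici_lt hf hV hdim
        (hT ▸ Submodule.finrank_sup_span_singleton hv)).le
      gcongr
      · exact Set.toFinite _
      · exact fun F hF => (hℱ hF).1
  rw [hstar, hcard, mul_div_assoc', le_div_iff₀ (by positivity)] at hbound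
  have hpow : (Nat.card K : ℚ) ^ (finrank K X - t) ≤ (Nat.card K : ℚ) ^ n :=
    pow_le_pow_right₀ hq' (by omega)
  nlinarith

lemma CrossIntersecting.center_eq_of_ncard_eq_Nprime {T' : Submodule K V}
    (h : CrossIntersecting t ℱ 𝒢) (hf : f.Nondegenerate) (hV : finrank K V = 2 * ν)
    (htn : t ≤ n) (hmn : 2 * m + n + 1 ≤ 2 * ν) (hnt : 2 * n + t + 1 ≤ 2 * ν)
    (hT : finrank K T = t) (hT' : finrank K T' = t)
    (hℱ : ℱ ⊆ polar f m ∩ Set.Ici T) (h𝒢 : 𝒢 ⊆ polar f n ∩ Set.Ici T')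
    (hℱcard : (ℱ.ncard : ℚ) = Nprime (Nat.card K) t m ν)
    (h𝒢card : (𝒢.ncard : ℚ) = Nprime (Nat.card K) t n ν) : T = T' := by
  have hT_le : ∀ G ∈ 𝒢, T ≤ G := fun G hG => by
    have hGn : finrank K G = n := (h𝒢 hG).1.2
    exact le_of_ncard_eq_Nprime hf hV hmn hT hℱ hℱcard (fun F hF => h F hF G hG)
      (hGn ▸ htn) hGn.le
  have hT'T : T' ≤ T := le_of_ncard_eq_Nprime hf hV hnt hT' h𝒢 h𝒢card
    (fun G hG => by rw [inf_eq_right.2 (hT_le G hG), hT]) hT.ge hT.le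
  exact (Submodule.eq_of_le_of_finrank_le hT'T (hT.trans hT'.symm).le).symm

section PairBound

variable (h : CrossIntersecting t ℱ 𝒢) (hf : f.Nondegenerate) (hV : finrank K V = 2 * ν)
  (htm : t ≤ m) (htn : t ≤ n) (hmn : 2 * m + n + 1 ≤ 2 * ν) (hnm : 2 * n + m + 1 ≤ 2 * ν)
  (hℱ : ℱ ⊆ polar f m) (h𝒢 : 𝒢 ⊆ polar f n) (hℱne : ℱ.Nonempty) (h𝒢ne : 𝒢.Nonempty)
include h hf hV htm htn hmn hnm hℱ h𝒢 hℱne h𝒢ne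

lemma CrossIntersecting.ncard_mul_ncard_le :
    (ℱ.ncard : ℚ) * 𝒢.ncard ≤ Nprime (Nat.card K) t m ν * Nprime (Nat.card K) t n ν := by
  have hq : 1 < Nat.card K := Finite.one_lt_card
  have hN : 0 < Nprime (Nat.card K) (tauCover f t ℱ) n ν := Nprime_pos hq (by omega)
  have hN' : 0 < Nprime (Nat.card K) t m ν := Nprime_pos hq (by omega)
  have hle := h.ncard_mul_ncard_le_pow_mul hf hV (by omega) (by omega) htm htn hℱ h𝒢 hℱne h𝒢ne
  exact hle.trans (mul_le_mul
    (four_mul_pow_pow_mul_Nprime_le hq hmn (h.le_tauCover hℱ hℱne h𝒢ne) (h.tauCover_le hℱ hℱne))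
    (four_mul_pow_pow_mul_Nprime_le hq hnm (h.symm.le_tauCover h𝒢 h𝒢ne hℱne)
      (h.symm.tauCover_le h𝒢 h𝒢ne))
    (by positivity) hN'.le)

variable
  (heq : (ℱ.ncard : ℚ) * 𝒢.ncard = Nprime (Nat.card K) t m ν * Nprime (Nat.card K) t n ν)
include heq

lemma CrossIntersecting.tauCover_eq_of_ncard_mul_ncard_eq : tauCover f t 𝒢 = t := by
  have hq : 1 < Nat.card K := Finite.one_lt_card
  have hN : 0 < Nprime (Nat.card K) (tauCover f t ℱ) n ν := Nprime_pos hq (by omega)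
  have hN' : 0 < Nprime (Nat.card K) t m ν := Nprime_pos hq (by omega)
  have hle := h.ncard_mul_ncard_le_pow_mul hf hV (by omega) (by omega) htm htn hℱ h𝒢 hℱne h𝒢ne
  have htτ : t ≤ tauCover f t 𝒢 := h.le_tauCover hℱ hℱne h𝒢ne
  by_contra hne
  exact heq.not_lt (hle.trans_lt (mul_lt_mul
    (four_mul_pow_pow_mul_Nprime_lt hq hmn (by omega) (h.tauCover_le hℱ hℱne))
    (four_mul_pow_pow_mul_Nprime_le hq hnm (h.symm.le_tauCover h𝒢 h𝒢ne hℱne)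
      (h.symm.tauCover_le h𝒢 h𝒢ne))
    (by positivity) hN'.le))

lemma CrossIntersecting.ncard_eq_Nprime_and_exists_eq_of_ncard_mul_ncard_eq :
    (ℱ.ncard : ℚ) = Nprime (Nat.card K) t m ν ∧ ∃ T ∈ polar f t, ℱ = polar f m ∩ Set.Ici T := by
  have hτℱ : tauCover f t ℱ = t := h.symm.tauCover_eq_of_ncard_mul_ncard_eq hf hV htn htm hnm hmn
    h𝒢 hℱ h𝒢ne hℱne (by rw [mul_comm, heq, mul_comm])
  have hτ𝒢 : tauCover f t 𝒢 = t :=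
    h.tauCover_eq_of_ncard_mul_ncard_eq hf hV htm htn hmn hnm hℱ h𝒢 hℱne h𝒢ne heq
  have hℱle := h.ncard_le hf hV (by omega) htn hℱ h𝒢 hℱne h𝒢ne
  have h𝒢le := h.symm.ncard_le hf hV (by omega) htm h𝒢 hℱ h𝒢ne hℱne
  simp only [hτℱ, hτ𝒢, Nat.sub_self, pow_zero, one_mul] at hℱle h𝒢le
  have hN : 0 < Nprime (Nat.card K) t n ν := Nprime_pos Finite.one_lt_card (by omega)
  have hℱcard : (ℱ.ncard : ℚ) = Nprime (Nat.card K) t m ν :=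
    hℱle.antisymm (le_of_mul_le_mul_right (heq ▸ by gcongr) hN)
  obtain ⟨G, hG⟩ := h𝒢ne
  obtain ⟨T, hT, hTτ⟩ := (h.symm.isTCover h𝒢 hG).exists_finrank_eq_tauCover
  rw [hτℱ] at hTτ
  refine ⟨hℱcard, T, ⟨hT.1, hTτ⟩, Set.eq_of_subset_of_ncard_le
    (fun F hF => ⟨hℱ hF, hT.le_of_finrank_eq hTτ hF⟩) ?_⟩
  have hstar := ncard_polar_inter_Ici_le hf hV (show m ≤ ν by omega) T
  rw [hTτ, ← hℱcard] at hstar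
  exact_mod_cast hstar

end PairBound

lemma exists_forall_eq_polar_inter_Ici_of_pairwise_ncard_mul_ncard_eq {ι : Type*} [Nontrivial ι]
    {m : ι → ℕ} {ℱ : ι → Set (Submodule K V)} (hf : f.Nondegenerate) (hV : finrank K V = 2 * ν)
    (hmt : ∀ i, t ≤ m i) (hdim : Pairwise fun i j => 2 * m i + m j + 1 ≤ 2 * ν)
    (hsub : ∀ i, ℱ i ⊆ polar f (m i)) (hne : ∀ i, (ℱ i).Nonempty)
    (hpair : Pairwise fun i j => CrossIntersecting t (ℱ i) (ℱ j))
    (hmul : Pairwise fun i j => ((ℱ i).ncard : ℚ) * (ℱ j).ncard =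
      Nprime (Nat.card K) t (m i) ν * Nprime (Nat.card K) t (m j) ν) :
    ∃ T ∈ polar f t, ∀ i, ℱ i = polar f (m i) ∩ Set.Ici T := by
  have hstar (i : ι) : ((ℱ i).ncard : ℚ) = Nprime (Nat.card K) t (m i) ν ∧
      ∃ T ∈ polar f t, ℱ i = polar f (m i) ∩ Set.Ici T := by
    obtain ⟨j, hj⟩ := exists_ne i
    exact (hpair hj.symm).ncard_eq_Nprime_and_exists_eq_of_ncard_mul_ncard_eq hf hV (hmt i)
      (hmt j) (hdim hj.symm) (hdim hj) (hsub i) (hsub j) (hne i) (hne j) (hmul hj.symm)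
  choose hcard T hT hℱ using hstar
  have hcenter : ∀ i j, T i = T j := fun i j => by
    rcases eq_or_ne i j with rfl | hij
    · rfl
    have hjt : 2 * m j + t + 1 ≤ 2 * ν := by
      have : 2 * m j + m i + 1 ≤ 2 * ν := hdim hij.symm
      have := hmt i
      omega
    exact (hpair hij).center_eq_of_ncard_eq_Nprime hf hV (hmt j) (hdim hij) hjt (hT i).2
      (hT j).2 (hℱ i).le (hℱ j).le (hcard i) (hcard j)
  obtain ⟨i₀⟩ : Nonempty ι := inferInstance
  exact ⟨T i₀, hT i₀, fun i => hcenter i₀ i ▸ hℱ i⟩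

end CrossIntersecting

section ProductOverPairs

variable {ι : Type*} [Fintype ι] [Nontrivial ι]

lemma prod_prod_erase_mul {M : Type*} [CommMonoid M] [DecidableEq ι] (y : ι → M) :
    ∏ i, ∏ j ∈ univ.erase i, y i * y j = (∏ i, y i) ^ (2 * (Fintype.card ι - 1)) := by
  have hcard : Fintype.card ι - 1 = Fintype.card ι - 2 + 1 := by
    have := Fintype.one_lt_card (α := ι)
    omega
  have hrow (i : ι) :
      ∏ j ∈ univ.erase i, y i * y j = y i ^ (Fintype.card ι - 2) * ∏ j, y j := by
    rw [prod_mul_distrib, prod_const, card_erase_of_mem (mem_univ i), card_univ, hcard, pow_succ,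
      mul_assoc, mul_prod_erase univ y (mem_univ i)]
  simp_rw [hrow]
  rw [prod_mul_distrib, prod_pow, prod_const, card_univ, ← pow_add]
  congr 1
  omega

variable {R : Type*} [CommSemiring R] [LinearOrder R] [IsStrictOrderedRing R] {x N : ι → R}

lemma prod_le_prod_of_pairwise_mul_le (hx : ∀ i, 0 ≤ x i) (hN : ∀ i, 0 ≤ N i)
    (h : Pairwise fun i j => x i * x j ≤ N i * N j) : ∏ i, x i ≤ ∏ i, N i := by
  classical
  have hcard : 2 * (Fintype.card ι - 1) ≠ 0 := by
    have := Fintype.one_lt_card (α := ι)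
    omega
  rw [← pow_le_pow_iff_left₀ (prod_nonneg fun i _ => hx i) (prod_nonneg fun i _ => hN i) hcard,
    ← prod_prod_erase_mul, ← prod_prod_erase_mul]
  exact prod_le_prod (fun i _ => prod_nonneg fun j _ => mul_nonneg (hx i) (hx j)) fun i _ =>
    prod_le_prod (fun j _ => mul_nonneg (hx i) (hx j)) fun j hj => h (ne_of_mem_erase hj).symm

lemma pairwise_mul_eq_of_prod_eq (hx : ∀ i, 0 < x i)
    (h : Pairwise fun i j => x i * x j ≤ N i * N j) (heq : ∏ i, x i = ∏ i, N i) :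
    Pairwise fun i j => x i * x j = N i * N j := by
  classical
  intro i j hij
  have hpos (k l : ι) : 0 < x k * x l := mul_pos (hx k) (hx l)
  have hrow (k : ι) : ∏ l ∈ univ.erase k, x k * x l ≤ ∏ l ∈ univ.erase k, N k * N l :=
    prod_le_prod (fun l _ => (hpos k l).le) fun l hl => h (ne_of_mem_erase hl).symm
  by_contra hne
  have hlt : ∏ k, ∏ l ∈ univ.erase k, x k * x l < ∏ k, ∏ l ∈ univ.erase k, N k * N l :=
    prod_lt_prod (fun k _ => prod_pos fun l _ => hpos k l) (fun k _ => hrow k)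
      ⟨i, mem_univ i, prod_lt_prod (fun l _ => hpos i l)
        (fun l hl => h (ne_of_mem_erase hl).symm)
        ⟨j, mem_erase.2 ⟨hij.symm, mem_univ j⟩, lt_of_le_of_ne (h hij) hne⟩⟩
  rw [prod_prod_erase_mul, prod_prod_erase_mul, heq] at hlt
  exact hlt.false

end ProductOverPairs

lemma two_mul_add_le_of_antitone {d : ℕ} (hd : 2 ≤ d) {m : Fin d → ℕ} (hm : Antitone m)
    {i j : Fin d} (hij : i ≠ j) : 2 * m i + m j ≤ 2 * m ⟨0, by omega⟩ + m ⟨1, by omega⟩ := by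
  have hle_zero (k : Fin d) : m k ≤ m ⟨0, by omega⟩ := hm (Fin.mk_le_of_le_val (Nat.zero_le _))
  have hle_one (k : Fin d) (hk : k.val ≠ 0) : m k ≤ m ⟨1, by omega⟩ :=
    hm (Fin.mk_le_of_le_val (Nat.one_le_iff_ne_zero.2 hk))
  have := hle_zero i
  have := hle_zero j
  rcases eq_or_ne i.val 0 with hi | hi
  · have := hle_one j fun hj => hij (Fin.ext (hi.trans hj.symm))
    omega
  · have := hle_one i hi
    omega

theorem stmt_2_general {ι : Type*} [Fintype ι] [Nontrivial ι] [Finite K] [Finite V]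
    {f : V →ₗ[K] V →ₗ[K] K} (hf : f.Nondegenerate) {ν t : ℕ} (hV : finrank K V = 2 * ν)
    {m : ι → ℕ} (hmt : ∀ i, t ≤ m i) (hdim : Pairwise fun i j => 2 * m i + m j + 1 ≤ 2 * ν)
    {ℱ : ι → Set (Submodule K V)} (hsub : ∀ i, ℱ i ⊆ polar f (m i))
    (hcross : ∀ F : ι → Submodule K V, (∀ i, F i ∈ ℱ i) →
      Pairwise fun i j => t ≤ finrank K ↥(F i ⊓ F j)) :
    (∏ i, ((ℱ i).ncard : ℚ)) ≤ (∏ i, Nprime (Nat.card K) t (m i) ν) ∧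
      ((∏ i, ((ℱ i).ncard : ℚ)) = (∏ i, Nprime (Nat.card K) t (m i) ν) →
        ∃ T ∈ polar f t, ∀ i, ℱ i = {F | F ∈ polar f (m i) ∧ T ≤ F}) := by
  have hmν (i : ι) : m i ≤ ν := by
    obtain ⟨j, hj⟩ := exists_ne i
    have : 2 * m i + m j + 1 ≤ 2 * ν := hdim hj.symm
    omega
  have hN (i : ι) : 0 < Nprime (Nat.card K) t (m i) ν := Nprime_pos Finite.one_lt_card (hmν i)
  by_cases hne : ∀ i, (ℱ i).Nonempty
  · have hpair := crossIntersecting_of_forall_transversal hne hcross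
    have hle : Pairwise fun i j => ((ℱ i).ncard : ℚ) * (ℱ j).ncard ≤
        Nprime (Nat.card K) t (m i) ν * Nprime (Nat.card K) t (m j) ν := fun i j hij =>
      (hpair hij).ncard_mul_ncard_le hf hV (hmt i) (hmt j) (hdim hij) (hdim hij.symm) (hsub i)
        (hsub j) (hne i) (hne j)
    refine ⟨prod_le_prod_of_pairwise_mul_le (fun i => Nat.cast_nonneg _) (fun i => (hN i).le) hle,
      fun heq => ?_⟩
    exact exists_forall_eq_polar_inter_Ici_of_pairwise_ncard_mul_ncard_eq hf hV hmt hdim hsub hne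
      hpair (pairwise_mul_eq_of_prod_eq
        (fun i => Nat.cast_pos.2 ((hne i).ncard_pos (Set.toFinite _))) hle heq)
  · push Not at hne
    obtain ⟨i, hi⟩ := hne
    have hlt : ∏ i, ((ℱ i).ncard : ℚ) < ∏ i, Nprime (Nat.card K) t (m i) ν := by
      rw [prod_eq_zero (mem_univ i) (by simp [hi])]
      exact prod_pos fun i _ => hN i
    exact ⟨hlt.le, fun heq => absurd heq hlt.ne⟩

theorem stmt_2
    (q ν t d : ℕ) (hq : IsPrimePow q) (hd : 2 ≤ d)
    {K : Type} [Field K] [Fintype K] (hK : Fintype.card K = q)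
    (f : (Fin (2 * ν) → K) →ₗ[K] (Fin (2 * ν) → K) →ₗ[K] K)
    (halt : ∀ x, f x x = 0)
    (hnd : ∀ x, (∀ y, f x y = 0) → x = 0)
    (hν : 0 < ν) (ht : 0 < t)
    (m : Fin d → ℕ) (hmpos : ∀ i, 0 < m i)
    (hmono : ∀ i j : Fin d, i ≤ j → m j ≤ m i)
    (hmt : ∀ i, t ≤ m i)
    (hdim : 2 * m ⟨0, by omega⟩ + m ⟨1, by omega⟩ + 1 ≤ 2 * ν)
    (ℱ : Fin d → Set (Submodule K (Fin (2 * ν) → K)))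
    (hsub : ∀ i, ℱ i ⊆ polar f (m i))
    (hcross : ∀ F : Fin d → Submodule K (Fin (2 * ν) → K),
      (∀ i, F i ∈ ℱ i) → t ≤ finrank K ↥(⨅ i, F i)) :
    (∏ i, ((ℱ i).ncard : ℚ)) ≤ (∏ i, Nprime q t (m i) ν) ∧
      ((∏ i, ((ℱ i).ncard : ℚ)) = (∏ i, Nprime q t (m i) ν) →
        ∃ T ∈ polar f t, ∀ i, ℱ i = {F | F ∈ polar f (m i) ∧ T ≤ F}) := by
  subst hK
  have : Nontrivial (Fin d) := Fin.nontrivial_iff_two_le.2 hd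
  rw [← Nat.card_eq_fintype_card]
  exact stmt_2_general (LinearMap.BilinForm.Nondegenerate.ofSeparatingLeft hnd) (by simp) hmt
    (fun i j hij => (Nat.succ_le_succ (two_mul_add_le_of_antitone hd hmono hij)).trans hdim) hsub
    fun F hF i j _ => (hcross F hF).trans
      (Submodule.finrank_mono (le_inf (iInf_le _ i) (iInf_le _ j)))

end
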